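/- Let α be an irrational vector in ℝ^d and let S ⊆ ℝ^d be a bounded Riemann measurable set. Suppose there exists at least one point x₀ ∈ 𝕋^d such that sup_{n ≥ 1} |∑_{k=0}^{n−1} χ_S(x₀ + kα) − n·Leb(S)| < ∞. Then S is a bounded remainder set with respect to α. -/

import Mathlib

/-!
The discrepancies form a cocycle over the rotation by `α`, namely
`D_n(x + m α) = D_{m+n}(x) - D_m(x)`, so a bound `C` for all `D_n(x₀)` gives the bound `2C` for
all `D_n` at every point of the forward orbit `x₀ + m α + ℤ^d`, `m ≥ 0`. This orbit is dense in
`ℝ^d` (`exists_orbit_mem`). For almost every `x` no point `x + k α + p` with `k ∈ ℕ`, `p ∈ ℤ^d`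
lies on the null set `∂S`; at such an `x` each `D_n` is locally constant
(`eventually_multFn_eq`), hence agrees with its value at some orbit point, and `|D_n(x)| ≤ 2C`.

Density of the forward orbit follows from Weyl equidistribution on the torus
(`tendsto_average_integral`): by the density of trigonometric polynomials it suffices to treat a
single nontrivial character, whose averages are normalized geometric sums with ratio `≠ 1`
by the irrationality of `α`.
-/

open MeasureTheory

/-- The multiplicity function of the projection of `S ⊆ ℝ^d` to the torus `ℝ^d/ℤ^d`,
viewed as a `ℤ^d`-periodic function on `ℝ^d`. -/
noncomputable def multFn {d : ℕ} (S : Set (Fin d → ℝ)) (x : Fin d → ℝ) : ℝ :=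
  ∑' k : Fin d → ℤ, Set.indicator S (fun _ => (1 : ℝ)) (x + fun i => (k i : ℝ))

/-- The discrepancy `∑_{k=0}^{n-1} χ_S(x + k v) − n · Leb(S)`. -/
noncomputable def disc {d : ℕ} (v : Fin d → ℝ) (S : Set (Fin d → ℝ)) (n : ℕ)
    (x : Fin d → ℝ) : ℝ :=
  (∑ k ∈ Finset.range n, multFn S (x + (k : ℝ) • v)) - n * (volume S).toReal

/-- `S` is a bounded remainder set with respect to the vector `v`. -/
def IsBRS {d : ℕ} (v : Fin d → ℝ) (S : Set (Fin d → ℝ)) : Prop :=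
  ∃ C : ℝ, ∀ᵐ x : Fin d → ℝ, ∀ n : ℕ, 1 ≤ n → |disc v S n x| ≤ C

/-- `α ∈ ℝ^d` is an irrational vector: `1, α₁, …, α_d` are linearly independent over `ℚ`. -/
def IsIrrationalVector {d : ℕ} (α : Fin d → ℝ) : Prop :=
  ∀ (n₀ : ℤ) (n : Fin d → ℤ), (n₀ : ℝ) + ∑ i, (n i : ℝ) * α i = 0 → n₀ = 0 ∧ n = 0

/-- The subgroup `ℤα + ℤ^d` of `ℝ^d`. -/
def lat {d : ℕ} (α : Fin d → ℝ) : Set (Fin d → ℝ) :=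
  {v | ∃ (q : ℤ) (p : Fin d → ℤ), v = (q : ℝ) • α + fun i => (p i : ℝ)}

/-- The parallelepiped spanned by the vectors `v 1, …, v d`. -/
def paral {d : ℕ} (v : Fin d → Fin d → ℝ) : Set (Fin d → ℝ) :=
  {x | ∃ t : Fin d → ℝ, (∀ k, 0 ≤ t k ∧ t k < 1) ∧ x = ∑ k, t k • v k}

/-- A `ℤ^d`-periodic function on `ℝ^d`, i.e. a function on the torus. -/
def IsZdPeriodic {d : ℕ} (g : (Fin d → ℝ) → ℝ) : Prop :=
  ∀ (x : Fin d → ℝ) (k : Fin d → ℤ), g (x + fun i => (k i : ℝ)) = g x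

/-- `g` is a transfer function for `S` with respect to `v`:
a function on the torus with `χ_S(x) − Leb S = g(x) − g(x−v)` a.e. -/
def IsTransfer {d : ℕ} (v : Fin d → ℝ) (S : Set (Fin d → ℝ)) (g : (Fin d → ℝ) → ℝ) : Prop :=
  IsZdPeriodic g ∧
    ∀ᵐ x : Fin d → ℝ, multFn S x - (volume S).toReal = g x - g (x - v)

/-- A bounded function whose set of discontinuity points is Lebesgue-null. -/
def RiemannIntegrableFn {d : ℕ} (g : (Fin d → ℝ) → ℝ) : Prop :=
  (∃ M : ℝ, ∀ x, |g x| ≤ M) ∧ volume {x | ¬ ContinuousAt g x} = 0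

/-- A bounded set is Riemann measurable if its boundary is Lebesgue-null. -/
def IsRiemannMeasurable {d : ℕ} (S : Set (Fin d → ℝ)) : Prop :=
  Bornology.IsBounded S ∧ volume (frontier S) = 0

/-- `S` and `S'` are equidecomposable, with pieces satisfying the predicate `P`,
using translations by vectors in `Γ`. -/
def EquidecompBy {d : ℕ} (P : Set (Fin d → ℝ) → Prop)
    (S S' : Set (Fin d → ℝ)) (Γ : Set (Fin d → ℝ)) : Prop :=
  ∃ (N : ℕ) (A : Fin N → Set (Fin d → ℝ)) (γ : Fin N → Fin d → ℝ),
    (∀ i, P (A i)) ∧ (∀ i, γ i ∈ Γ) ∧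
    (∀ i j, i ≠ j → volume (A i ∩ A j) = 0) ∧
    volume (symmDiff S (⋃ i, A i)) = 0 ∧
    (∀ i j, i ≠ j → volume (((fun x => x + γ i) '' A i) ∩ ((fun x => x + γ j) '' A j)) = 0) ∧
    volume (symmDiff S' (⋃ i, (fun x => x + γ i) '' A i)) = 0

/-- A set is centrally symmetric if it equals its reflection about some point `c`. -/
def IsCentrallySymmetric {d : ℕ} (A : Set (Fin d → ℝ)) : Prop :=
  ∃ c : Fin d → ℝ, ∀ x, x ∈ A ↔ (2 : ℝ) • c - x ∈ A

open MeasureTheory Filter Topology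

/-! ### Equidistribution of torus rotations -/

lemma mFourier_add_apply {d : ℕ} (n : Fin d → ℤ) (x y : UnitAddTorus (Fin d)) :
    UnitAddTorus.mFourier n (x + y) = UnitAddTorus.mFourier n x * UnitAddTorus.mFourier n y := by
  simp only [UnitAddTorus.mFourier, ContinuousMap.coe_mk, Pi.add_apply, fourier_apply, smul_add,
    AddCircle.toCircle_add, Circle.coe_mul, Finset.prod_mul_distrib]

lemma mFourier_add_nsmul {d : ℕ} (n : Fin d → ℤ) (x a : UnitAddTorus (Fin d)) (k : ℕ) :
    UnitAddTorus.mFourier n (x + k • a)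
      = UnitAddTorus.mFourier n x * UnitAddTorus.mFourier n a ^ k := by
  induction k with
  | zero => simp
  | succ k ih => rw [succ_nsmul, ← add_assoc, mFourier_add_apply, ih, pow_succ, mul_assoc]

lemma norm_mFourier_apply {d : ℕ} (n : Fin d → ℤ) (x : UnitAddTorus (Fin d)) :
    ‖UnitAddTorus.mFourier n x‖ = 1 := by
  simp only [UnitAddTorus.mFourier, ContinuousMap.coe_mk, fourier_apply, norm_prod,
    Circle.norm_coe, Finset.prod_const_one]

/-- The projection of a vector of `ℝ^d` to the torus. -/
def toTorus {d : ℕ} (x : Fin d → ℝ) : UnitAddTorus (Fin d) := fun i => (x i : UnitAddCircle)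

/-- Irrationality of `α` says exactly that no nontrivial character is trivial on `α`. -/
lemma mFourier_toTorus_ne_one {d : ℕ} {α : Fin d → ℝ} (hα : IsIrrationalVector α)
    {n : Fin d → ℤ} (hn : n ≠ 0) : UnitAddTorus.mFourier n (toTorus α) ≠ 1 := by
  intro h
  have h1 : UnitAddTorus.mFourier n (toTorus α)
      = Complex.exp (2 * Real.pi * Complex.I * ((∑ i, (n i : ℝ) * α i : ℝ) : ℂ)) := by
    simp only [UnitAddTorus.mFourier, ContinuousMap.coe_mk, toTorus, fourier_coe_apply]
    rw [← Complex.exp_sum]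
    congr 1
    push_cast
    rw [Finset.mul_sum]
    refine Finset.sum_congr rfl fun i _ => ?_
    ring
  rw [h1, Complex.exp_eq_one_iff] at h
  obtain ⟨m, hm⟩ := h
  have hpi : (2 * Real.pi * Complex.I : ℂ) ≠ 0 := Complex.two_pi_I_ne_zero
  have h2 : ((∑ i, (n i : ℝ) * α i : ℝ) : ℂ) = ((m : ℝ) : ℂ) := by
    apply mul_left_cancel₀ hpi
    rw [hm]
    push_cast
    ring
  have h3 : ∑ i, (n i : ℝ) * α i = (m : ℝ) := Complex.ofReal_injective h2
  exact hn (hα (-m) n (by push_cast; rw [h3]; ring)).2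

/-- The space average of a nontrivial character vanishes, by translation invariance. -/
lemma integral_mFourier_eq_zero {d : ℕ} (μ : Measure (UnitAddTorus (Fin d)))
    [μ.IsAddRightInvariant] {n : Fin d → ℤ} {a : UnitAddTorus (Fin d)}
    (h : UnitAddTorus.mFourier n a ≠ 1) : ∫ x, UnitAddTorus.mFourier n x ∂μ = 0 := by
  have h1 := integral_add_right_eq_self (μ := μ) (fun x => UnitAddTorus.mFourier n x) a
  simp only [mFourier_add_apply] at h1
  rw [integral_mul_const] at h1
  by_contra h0
  exact h (mul_left_cancel₀ h0 (by rw [h1, mul_one]))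

lemma tendsto_average_mFourier {d : ℕ} (n : Fin d → ℤ) (x a : UnitAddTorus (Fin d))
    (h : UnitAddTorus.mFourier n a ≠ 1) :
    Tendsto (fun N : ℕ => (N : ℂ)⁻¹ * ∑ k ∈ Finset.range N, UnitAddTorus.mFourier n (x + k • a))
      atTop (𝓝 0) := by
  simp only [mFourier_add_nsmul, ← Finset.mul_sum, geom_sum_eq h]
  set z := UnitAddTorus.mFourier n a
  have hz : ‖z‖ = 1 := norm_mFourier_apply n a
  refine squeeze_zero_norm (a := fun N : ℕ => (2 / ‖z - 1‖) / (N : ℝ)) (fun N => ?_)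
    (tendsto_const_nhds.div_atTop tendsto_natCast_atTop_atTop)
  rw [norm_mul, norm_mul, norm_mFourier_apply, norm_inv, norm_div, one_mul, Complex.norm_natCast,
    div_eq_inv_mul _ (N : ℝ)]
  gcongr
  calc ‖z ^ N - 1‖ ≤ ‖z ^ N‖ + ‖(1 : ℂ)‖ := norm_sub_le _ _
    _ = 2 := by rw [norm_pow, hz]; norm_num

/-- The Koopman operator of the rotation by `a` on continuous functions. -/
noncomputable def rot {d : ℕ} (a : UnitAddTorus (Fin d)) (f : C(UnitAddTorus (Fin d), ℂ)) :
    C(UnitAddTorus (Fin d), ℂ) := f.comp ⟨fun x => x + a, by fun_prop⟩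

lemma rot_iterate {d : ℕ} (a x : UnitAddTorus (Fin d)) (f : C(UnitAddTorus (Fin d), ℂ)) (k : ℕ) :
    (rot a)^[k] f x = f (x + k • a) := by
  induction k generalizing x with
  | zero => simp
  | succ k ih =>
    rw [Function.iterate_succ_apply']
    change (rot a)^[k] f (x + a) = _
    rw [ih, succ_nsmul', add_assoc]

lemma lipschitz_rot {d : ℕ} (a : UnitAddTorus (Fin d)) : LipschitzWith 1 (rot a) := by
  refine LipschitzWith.of_dist_le_mul fun f g => ?_
  rw [NNReal.coe_one, one_mul, ContinuousMap.dist_le dist_nonneg]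
  exact fun x => ContinuousMap.dist_apply_le_dist (x + a)

/-- Weyl equidistribution for rotations of the torus. -/
lemma tendsto_average_integral {d : ℕ} (μ : Measure (UnitAddTorus (Fin d)))
    [IsProbabilityMeasure μ] [μ.IsAddRightInvariant] (x a : UnitAddTorus (Fin d))
    (ha : ∀ n : Fin d → ℤ, n ≠ 0 → UnitAddTorus.mFourier n a ≠ 1)
    (f : C(UnitAddTorus (Fin d), ℂ)) :
    Tendsto (fun N : ℕ => (N : ℂ)⁻¹ * ∑ k ∈ Finset.range N, f (x + k • a))
      atTop (𝓝 (∫ y, f y ∂μ)) := by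
  have hint : ∀ g : C(UnitAddTorus (Fin d), ℂ), Integrable (fun y => g y) μ := fun g =>
    g.continuous.integrable_of_hasCompactSupport (HasCompactSupport.of_compactSpace _)
  have hl : Continuous fun g : C(UnitAddTorus (Fin d), ℂ) => ∫ y, g y ∂μ := by
    refine (LipschitzWith.of_dist_le_mul (K := 1) fun f g => ?_).continuous
    rw [dist_eq_norm, ← integral_sub (hint f) (hint g), NNReal.coe_one, one_mul]
    refine (norm_integral_le_of_norm_le_const (μ := μ) (C := dist f g)
      (Eventually.of_forall fun y => ?_)).trans (by simp)
    rw [← dist_eq_norm]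
    exact ContinuousMap.dist_apply_le_dist y
  -- By equicontinuity of the averages, the convergence set is closed in the uniform norm.
  have hclosed := isClosed_setOfPred_tendsto_birkhoffAverage (𝕜 := ℂ)
    (f := rot a) (g := fun g : C(UnitAddTorus (Fin d), ℂ) => g x) (lipschitz_rot a)
    (LipschitzWith.of_dist_le_mul (K := 1) fun f g => by
      rw [NNReal.coe_one, one_mul]; exact ContinuousMap.dist_apply_le_dist x).uniformContinuous hl
  have heq : ∀ (N : ℕ) (g : C(UnitAddTorus (Fin d), ℂ)),
      birkhoffAverage ℂ (rot a) (fun g : C(UnitAddTorus (Fin d), ℂ) => g x) N g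
        = (N : ℂ)⁻¹ * ∑ k ∈ Finset.range N, g (x + k • a) := by
    intro N g
    simp [birkhoffAverage, birkhoffSum, rot_iterate]
  simp only [heq] at hclosed
  have hspan : ∀ g ∈ Submodule.span ℂ (Set.range (UnitAddTorus.mFourier (d := Fin d))),
      Tendsto (fun N : ℕ => (N : ℂ)⁻¹ * ∑ k ∈ Finset.range N, g (x + k • a))
        atTop (𝓝 (∫ y, g y ∂μ)) := by
    intro g hg
    induction hg using Submodule.span_induction with
    | mem g hg =>
      obtain ⟨n, rfl⟩ := hg
      by_cases hn : n = 0
      · subst hn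
        refine tendsto_const_nhds.congr' ?_
        filter_upwards [eventually_ne_atTop 0] with N hN
        have : (N : ℂ) ≠ 0 := Nat.cast_ne_zero.mpr hN
        simp [UnitAddTorus.mFourier_zero, this]
      · rw [integral_mFourier_eq_zero μ (ha n hn)]
        exact tendsto_average_mFourier n x a (ha n hn)
    | zero => simp
    | add g h _ _ hg hh =>
      simp only [ContinuousMap.add_apply, Finset.sum_add_distrib, mul_add]
      rw [integral_add (hint g) (hint h)]
      exact hg.add hh
    | smul c g _ hg =>
      simp only [ContinuousMap.smul_apply, smul_eq_mul, ← Finset.mul_sum]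
      rw [integral_const_mul]
      simpa only [mul_left_comm] using hg.const_mul c
  have hmem : f ∈ (Submodule.span ℂ
      (Set.range (UnitAddTorus.mFourier (d := Fin d)))).topologicalClosure := by
    rw [UnitAddTorus.span_mFourier_closure_eq_top]; trivial
  exact closure_minimal (fun g hg => hspan g hg) hclosed hmem

/-- Forward orbits of a rotation on which no nontrivial character is trivial are dense. -/
lemma exists_nsmul_mem {d : ℕ} (x a : UnitAddTorus (Fin d))
    (ha : ∀ n : Fin d → ℤ, n ≠ 0 → UnitAddTorus.mFourier n a ≠ 1)
    {U : Set (UnitAddTorus (Fin d))} (hU : IsOpen U) (hne : U.Nonempty) :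
    ∃ k : ℕ, x + k • a ∈ U := by
  by_contra! hk
  obtain ⟨u, hu⟩ := hne
  obtain ⟨f, hf0, hf1, hf⟩ := exists_continuous_zero_one_of_isClosed (s := Uᶜ) (t := {u})
    hU.isClosed_compl isClosed_singleton (by simpa using hu)
  let μ : Measure (UnitAddTorus (Fin d)) :=
    Measure.pi fun _ => (AddCircle.haarAddCircle : Measure (AddCircle (1 : ℝ)))
  let F : C(UnitAddTorus (Fin d), ℂ) := ⟨fun y => (f y : ℂ), by fun_prop⟩
  have h1 := tendsto_average_integral μ x a ha F
  have h2 : ∀ k : ℕ, F (x + k • a) = 0 := fun k => by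
    have : f (x + k • a) = 0 := hf0 (hk k)
    simp [F, this]
  simp only [h2, Finset.sum_const_zero, mul_zero] at h1
  have h3 : ∫ y, (f y : ℂ) ∂μ = 0 := (tendsto_nhds_unique h1 tendsto_const_nhds)
  rw [integral_complex_ofReal] at h3
  have h4 : 0 < ∫ y, f y ∂μ :=
    f.continuous.integral_pos_of_hasCompactSupport_nonneg_nonzero
      (HasCompactSupport.of_compactSpace _) (fun y => (hf y).1) (x := u)
      (by have : f u = 1 := hf1 rfl
          simp [this])
  exact h4.ne' (by exact_mod_cast h3)

/-- Kronecker's theorem: `{x₀ + mα + p : m ∈ ℕ, p ∈ ℤ^d}` is dense in `ℝ^d`. -/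
lemma exists_orbit_mem {d : ℕ} {α : Fin d → ℝ} (hα : IsIrrationalVector α) (x₀ : Fin d → ℝ)
    {U : Set (Fin d → ℝ)} (hU : IsOpen U) (hne : U.Nonempty) :
    ∃ (m : ℕ) (p : Fin d → ℤ), (x₀ + (m : ℝ) • α + fun i => (p i : ℝ)) ∈ U := by
  have hopen : IsOpenMap (toTorus (d := d)) :=
    IsOpenMap.piMap (fun _ => QuotientAddGroup.isOpenMap_coe)
      (Eventually.of_forall fun _ => QuotientAddGroup.mk_surjective)
  obtain ⟨m, u, hu, hmu⟩ := exists_nsmul_mem (toTorus x₀) (toTorus α)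
    (fun n hn => mFourier_toTorus_ne_one hα hn) (hopen U hU) (hne.image _)
  have h : ∀ i, ∃ p : ℤ, x₀ i + m * α i + p = u i := by
    intro i
    have hi : ((u i : ℝ) : UnitAddCircle) = ((x₀ i + m * α i : ℝ) : UnitAddCircle) := by
      have := congrFun hmu i
      simpa [toTorus] using this
    rw [← sub_eq_zero, ← AddCircle.coe_sub, AddCircle.coe_eq_zero_iff] at hi
    obtain ⟨p, hp⟩ := hi
    exact ⟨p, by rw [zsmul_eq_mul, mul_one] at hp; linarith⟩
  choose p hp using h
  refine ⟨m, p, ?_⟩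
  convert hu
  ext i
  simpa using hp i

/-! ### Local constancy and periodicity of the discrepancy -/

/-- If no integer translate of `x` lies on the boundary of the bounded set `S`, the multiplicity
function is locally constant at `x`. -/
lemma eventually_multFn_eq {d : ℕ} {S : Set (Fin d → ℝ)} (hS : Bornology.IsBounded S)
    {x : Fin d → ℝ} (hx : ∀ p : Fin d → ℤ, (x + fun i => (p i : ℝ)) ∉ frontier S) :
    ∀ᶠ y in 𝓝 x, multFn S y = multFn S x := by
  obtain ⟨R, hR⟩ := hS.exists_norm_le
  -- Only finitely many integer translates of the unit ball around `x` can meet `S`.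
  have hfin : {p : Fin d → ℤ | ‖(fun i => (p i : ℝ) : Fin d → ℝ)‖ ≤ R + (‖x‖ + 1)}.Finite := by
    refine (Set.finite_Icc (fun _ => -⌈R + (‖x‖ + 1)⌉ : Fin d → ℤ)
      (fun _ => ⌈R + (‖x‖ + 1)⌉)).subset fun p hp => ?_
    have h1 : ∀ i, |(p i : ℝ)| ≤ ⌈R + (‖x‖ + 1)⌉ := fun i =>
      ((norm_le_pi_norm (fun i => (p i : ℝ)) i).trans hp).trans (Int.le_ceil _)
    exact ⟨fun i => by exact_mod_cast (abs_le.mp (h1 i)).1,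
      fun i => by exact_mod_cast (abs_le.mp (h1 i)).2⟩
  have hmem : ∀ p : Fin d → ℤ, ∀ᶠ y in 𝓝 x,
      ((y + fun i => (p i : ℝ)) ∈ S ↔ (x + fun i => (p i : ℝ)) ∈ S) := by
    intro p
    have hc : Tendsto (fun y : Fin d → ℝ => y + fun i => (p i : ℝ)) (𝓝 x)
        (𝓝 (x + fun i => (p i : ℝ))) := (continuous_add_const _).continuousAt
    by_cases hin : (x + fun i => (p i : ℝ)) ∈ S
    · have : S ∈ 𝓝 (x + fun i => (p i : ℝ)) := by
        rw [mem_interior_iff_mem_nhds.symm]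
        by_contra h
        exact hx p ⟨subset_closure hin, h⟩
      filter_upwards [hc this] with y hy
      exact ⟨fun _ => hin, fun _ => hy⟩
    · have : Sᶜ ∈ 𝓝 (x + fun i => (p i : ℝ)) := by
        rw [mem_interior_iff_mem_nhds.symm, interior_compl]
        intro h
        exact hx p ⟨h, fun h' => hin (interior_subset h')⟩
      filter_upwards [hc this] with y hy
      exact ⟨fun h => absurd h hy, fun h => absurd h hin⟩
  filter_upwards [(eventually_all_finite hfin).mpr fun p _ => hmem p,
    Metric.ball_mem_nhds x one_pos] with y hy hyx
  have hny : ‖y‖ ≤ ‖x‖ + 1 := by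
    have h1 : ‖y - x‖ < 1 := by simpa [dist_eq_norm] using hyx
    have h2 := norm_sub_norm_le y x
    linarith
  have hfar : ∀ (z : Fin d → ℝ) (p : Fin d → ℤ), ‖z‖ ≤ ‖x‖ + 1 → (z + fun i => (p i : ℝ)) ∈ S →
      ‖(fun i => (p i : ℝ) : Fin d → ℝ)‖ ≤ R + (‖x‖ + 1) := by
    intro z p hz hzS
    have h1 := norm_sub_le (z + fun i => (p i : ℝ)) z
    rw [add_sub_cancel_left] at h1
    linarith [hR _ hzS]
  refine tsum_congr fun p => ?_
  have hiff : (y + fun i => (p i : ℝ)) ∈ S ↔ (x + fun i => (p i : ℝ)) ∈ S :=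
    ⟨fun h => (hy p (hfar y p hny h)).mp h,
      fun h => (hy p (hfar x p (by linarith) h)).mpr h⟩
  by_cases h : (x + fun i => (p i : ℝ)) ∈ S
  · rw [Set.indicator_of_mem h, Set.indicator_of_mem (hiff.mpr h)]
  · rw [Set.indicator_of_notMem h, Set.indicator_of_notMem (mt hiff.mp h)]

lemma multFn_add_int {d : ℕ} (S : Set (Fin d → ℝ)) : IsZdPeriodic (multFn S) := by
  intro x k
  unfold multFn
  rw [← (Equiv.addLeft k).tsum_eq
    (fun p : Fin d → ℤ => S.indicator (fun _ => (1 : ℝ)) (x + fun i => (p i : ℝ)))]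
  refine tsum_congr fun p => ?_
  congr 1
  ext i
  simp [add_assoc]

lemma disc_add_int {d : ℕ} (v : Fin d → ℝ) (S : Set (Fin d → ℝ)) (n : ℕ) :
    IsZdPeriodic (disc v S n) := by
  intro x p
  simp only [disc, add_right_comm x (fun i => (p i : ℝ)), multFn_add_int S _ p]

/-- The cocycle identity for the discrepancies. -/
lemma disc_add_smul {d : ℕ} (v : Fin d → ℝ) (S : Set (Fin d → ℝ)) (n m : ℕ) (x : Fin d → ℝ) :
    disc v S n (x + (m : ℝ) • v) = disc v S (m + n) x - disc v S m x := by
  simp only [disc, Finset.sum_range_add, Nat.cast_add, add_smul, add_assoc]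
  ring

lemma eventually_disc_eq {d : ℕ} (v : Fin d → ℝ) {S : Set (Fin d → ℝ)}
    (hS : Bornology.IsBounded S) {x : Fin d → ℝ}
    (hx : ∀ (k : ℕ) (p : Fin d → ℤ), (x + (k : ℝ) • v + fun i => (p i : ℝ)) ∉ frontier S)
    (n : ℕ) : ∀ᶠ y in 𝓝 x, disc v S n y = disc v S n x := by
  have h : ∀ k : ℕ, ∀ᶠ y in 𝓝 x,
      multFn S (y + (k : ℝ) • v) = multFn S (x + (k : ℝ) • v) := fun k =>
    ((continuous_add_const ((k : ℝ) • v)).continuousAt (x := x)).eventually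
      (eventually_multFn_eq hS (hx k))
  filter_upwards [(eventually_all_finset (Finset.range n)).mpr fun k _ => h k] with y hy
  rw [disc, disc, Finset.sum_congr rfl hy]

/-- if `S` is bounded and Riemann measurable and the discrepancies are
bounded at a single point `x₀`, then `S` is a bounded remainder set. -/
theorem stmt11 {d : ℕ} (hd : 1 ≤ d) (α : Fin d → ℝ) (hα : IsIrrationalVector α)
    (S : Set (Fin d → ℝ)) (hS : IsRiemannMeasurable S) (x₀ : Fin d → ℝ)
    (hx₀ : ∃ C : ℝ, ∀ n : ℕ, 1 ≤ n → |disc α S n x₀| ≤ C) :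
    IsBRS α S := by
  obtain ⟨C, hC⟩ := hx₀
  have hC' : ∀ n : ℕ, |disc α S n x₀| ≤ C := by
    intro n
    rcases Nat.eq_zero_or_pos n with rfl | hn
    · simpa [disc] using (abs_nonneg _).trans (hC 1 le_rfl)
    · exact hC n hn
  refine ⟨2 * C, ?_⟩
  have hae : ∀ᵐ x : Fin d → ℝ, ∀ (k : ℕ) (p : Fin d → ℤ),
      (x + (k : ℝ) • α + fun i => (p i : ℝ)) ∉ frontier S := by
    rw [ae_all_iff]
    intro k
    rw [ae_all_iff]
    intro p
    rw [ae_iff]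
    simp only [not_not, add_assoc]
    exact (measure_preimage_add_right volume _ _).trans hS.2
  filter_upwards [hae] with x hx n _
  obtain ⟨U, hUsub, hU, hxU⟩ := mem_nhds_iff.mp (eventually_disc_eq α hS.1 hx n)
  obtain ⟨m, p, hmp⟩ := exists_orbit_mem hα x₀ hU ⟨x, hxU⟩
  have h : disc α S n _ = disc α S n x := hUsub hmp
  rw [← h, disc_add_int, disc_add_smul]
  calc |disc α S (m + n) x₀ - disc α S m x₀|
      ≤ |disc α S (m + n) x₀| + |disc α S m x₀| := abs_sub _ _
    _ ≤ 2 * C := by linarith [hC' (m + n), hC' m]
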